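/- arXiv:2412.20708 — 2 statements merged into one kernel-verified Lean document; each statement's English description precedes it below -/
import Mathlib

section
/- Let Ξ be a nonempty compact subset of ℝ^d, let Q : Ξ → ℝ be bounded Borel measurable, let 𝒵 be a nonempty finite set, let ψ_1, …, ψ_m : Ξ × 𝒵 → ℝ be bounded with ψ_i(·, z) Borel measurable for each z, let γ_1, …, γ_m : 𝒵 → ℝ, and let 𝒫^I = { (P, z) : z ∈ 𝒵, P a Borel probability measure on Ξ with ∫_Ξ ψ_i(ξ, z) dP(ξ) ≤ γ_i(z) for all i }. Let η* ∈ ℝ and v* ∈ ℝ, and suppose: (a) there exist z⁰ ∈ 𝒵, points ξ_1, …, ξ_n ∈ Ξ and p_1, …, p_n ≥ 0 with ∑_j p_j = 1, ∑_j p_j ψ_i(ξ_j, z⁰) ≤ γ_i(z⁰) for all i, and ∑_j p_j Q(ξ_j) = η*; and (b) for every z ∈ 𝒵 there exist α_z ∈ ℝ and β_{z,1}, …, β_{z,m} ≥ 0 with α_z + ∑_{i=1}^m γ_i(z) β_{z,i} ≤ η* and Q(ξ) − α_z − ∑_{i=1}^m ψ_i(ξ, z) β_{z,i} ≤ v* for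 every ξ ∈ Ξ. Then η* ≤ sup_{(P,z) ∈ 𝒫^I} ∫_Ξ Q dP ≤ η* + v*. -/
open MeasureTheory

/-! The lower bound holds because the discrete measure `∑ j, p j • δ_(ξ j)` is itself feasible.
The upper bound is weak duality at each fixed `z`: integrating the reduced-cost inequality against
a feasible measure and using `β_z ≥ 0` bounds the objective by `v + (α_z + ∑ i, γ i z * β_z i)`. -/

section MomentAmbiguity

open scoped NNReal

variable {X ι κ : Type*} [MeasurableSpace X]

section DiscreteMeasure

variable [Fintype κ]

/-- The discrete measure with mass `p j` at the scenario `ξ j`; coinciding scenarios accumulate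
their masses. -/
noncomputable def discreteMeasure (ξ : κ → X) (p : κ → ℝ≥0) : Measure X :=
  ∑ j, p j • Measure.dirac (ξ j)

lemma isProbabilityMeasure_discreteMeasure (ξ : κ → X) {p : κ → ℝ≥0} (hp : ∑ j, p j = 1) :
    IsProbabilityMeasure (discreteMeasure ξ p) where
  measure_univ := by
    simp only [discreteMeasure, Measure.finsetSum_apply, Measure.smul_apply, measure_univ,
      ENNReal.smul_def, smul_eq_mul, mul_one]
    exact_mod_cast hp

variable [MeasurableSingletonClass X]

lemma discreteMeasure_compl_eq_zero {s : Set X} {ξ : κ → X} (hξ : ∀ j, ξ j ∈ s) (p : κ → ℝ≥0) :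
    discreteMeasure ξ p sᶜ = 0 := by
  simp [discreteMeasure, hξ]

lemma integral_discreteMeasure {E : Type*} [NormedAddCommGroup E] [NormedSpace ℝ E]
    [CompleteSpace E] (ξ : κ → X) (p : κ → ℝ≥0) (f : X → E) :
    ∫ x, f x ∂(discreteMeasure ξ p) = ∑ j, p j • f (ξ j) := by
  have integrable_smul_dirac (j : κ) : Integrable f (p j • Measure.dirac (ξ j)) :=
    (integrable_dirac enorm_lt_top).smul_measure_nnreal
  rw [discreteMeasure, integral_finsetSum_measure fun j _ ↦ integrable_smul_dirac j]
  simp only [integral_smul_nnreal_measure, integral_dirac]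

end DiscreteMeasure

lemma integrable_of_norm_le_of_measure_compl_eq_zero {E : Type*} [NormedAddCommGroup E]
    {P : Measure X} [IsFiniteMeasure P] {s : Set X} (hs : P sᶜ = 0) {f : X → E}
    (hf : AEStronglyMeasurable f P) (hb : ∃ C, ∀ x ∈ s, ‖f x‖ ≤ C) : Integrable f P := by
  obtain ⟨C, hC⟩ := hb
  have ae_mem : ∀ᵐ x ∂P, x ∈ s := hs
  exact .of_bound hf C (ae_mem.mono hC)

/-- The ambiguity set of probability measures supported in `Ξ` that satisfy the moment constraints
`∫ ψ i ≤ γ i`. The mixed-integer ambiguity set is the family of these sets indexed by the discrete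
selection `z`. -/
def momentAmbiguitySet (Ξ : Set X) (ψ : ι → X → ℝ) (γ : ι → ℝ) : Set (Measure X) :=
  {P | IsProbabilityMeasure P ∧ P Ξᶜ = 0 ∧ ∀ i, ∫ x, ψ i x ∂P ≤ γ i}

namespace momentAmbiguitySet

variable {Ξ : Set X} {ψ : ι → X → ℝ} {γ : ι → ℝ}

lemma discreteMeasure_mem [MeasurableSingletonClass X] [Fintype κ] {ξ : κ → X} {p : κ → ℝ≥0}
    (hξ : ∀ j, ξ j ∈ Ξ) (hp : ∑ j, p j = 1) (hfeas : ∀ i, ∑ j, p j * ψ i (ξ j) ≤ γ i) :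
    discreteMeasure ξ p ∈ momentAmbiguitySet Ξ ψ γ :=
  ⟨isProbabilityMeasure_discreteMeasure ξ hp, discreteMeasure_compl_eq_zero hξ p,
    fun i ↦ (integral_discreteMeasure ξ p (ψ i)).trans_le (hfeas i)⟩

lemma integrable_of_mem {P : Measure X} (hP : P ∈ momentAmbiguitySet Ξ ψ γ) {f : X → ℝ}
    (hf : Measurable f) (hb : ∃ C, ∀ x ∈ Ξ, |f x| ≤ C) : Integrable f P :=
  have := hP.1
  integrable_of_norm_le_of_measure_compl_eq_zero hP.2.1 hf.aestronglyMeasurable hb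

lemma integral_le_of_reduced_cost_le [Fintype ι] {P : Measure X}
    (hP : P ∈ momentAmbiguitySet Ξ ψ γ) {Q : X → ℝ} (hQ : Integrable Q P)
    (hψ : ∀ i, Integrable (ψ i) P) {α v : ℝ} {β : ι → ℝ} (hβ : ∀ i, 0 ≤ β i)
    (hred : ∀ x ∈ Ξ, Q x - α - ∑ i, ψ i x * β i ≤ v) :
    ∫ x, Q x ∂P ≤ v + (α + ∑ i, γ i * β i) := by
  obtain ⟨_, hPΞ, hmoment⟩ := hP
  have ae_mem : ∀ᵐ x ∂P, x ∈ Ξ := hPΞ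
  have integrable_sum : Integrable (fun x ↦ ∑ i, ψ i x * β i) P :=
    integrable_finsetSum _ fun i _ ↦ (hψ i).mul_const (β i)
  have majorant : ∀ᵐ x ∂P, Q x ≤ v + α + ∑ i, ψ i x * β i :=
    ae_mem.mono fun x hx ↦ by linarith [hred x hx]
  calc
    ∫ x, Q x ∂P ≤ ∫ x, (v + α + ∑ i, ψ i x * β i) ∂P :=
      integral_mono_ae hQ ((integrable_const _).add integrable_sum) majorant
    _ = v + α + ∑ i, (∫ x, ψ i x ∂P) * β i := by
      rw [integral_add (integrable_const _) integrable_sum,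
        integral_finsetSum _ fun i _ ↦ (hψ i).mul_const (β i)]
      simp only [integral_const, probReal_univ, one_smul, integral_mul_const]
    _ ≤ v + α + ∑ i, γ i * β i := by
      gcongr with i
      exacts [hβ i, hmoment i]
    _ = v + (α + ∑ i, γ i * β i) := add_assoc ..

end momentAmbiguitySet

open momentAmbiguitySet in
theorem mixed_integer_pricing_bounds_general [MeasurableSingletonClass X] [Fintype ι] [Fintype κ]
    (Ξ : Set X) (Q : X → ℝ) (hQm : Measurable Q) (hQb : ∃ C, ∀ x ∈ Ξ, |Q x| ≤ C)
    {Z : Type*} (ψ : ι → X → Z → ℝ) (hψm : ∀ i z, Measurable fun x ↦ ψ i x z)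
    (hψb : ∀ i z, ∃ C, ∀ x ∈ Ξ, |ψ i x z| ≤ C) (γ : ι → Z → ℝ) (η v : ℝ)
    (hprimal : ∃ (z₀ : Z) (ξ : κ → X) (p : κ → ℝ),
      (∀ j, ξ j ∈ Ξ) ∧ (∀ j, 0 ≤ p j) ∧ ∑ j, p j = 1 ∧
      (∀ i, ∑ j, p j * ψ i (ξ j) z₀ ≤ γ i z₀) ∧ ∑ j, p j * Q (ξ j) = η)
    (hdual : ∀ z : Z, ∃ (α : ℝ) (β : ι → ℝ),
      (∀ i, 0 ≤ β i) ∧ α + ∑ i, γ i z * β i ≤ η ∧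
      ∀ x ∈ Ξ, Q x - α - ∑ i, ψ i x z * β i ≤ v) :
    let values : Set ℝ := {w | ∃ (P : Measure X) (z : Z),
      P ∈ momentAmbiguitySet Ξ (fun i x ↦ ψ i x z) (fun i ↦ γ i z) ∧ ∫ x, Q x ∂P = w}
    η ≤ sSup values ∧ sSup values ≤ η + v := by
  intro values
  have value_mem : η ∈ values := by
    obtain ⟨z₀, ξ, p, hξ, hp, hsum, hfeas, hη⟩ := hprimal
    lift p to κ → ℝ≥0 using hp
    have mass_eq_one : ∑ j, p j = 1 := by simpa [← NNReal.coe_inj] using hsum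
    exact ⟨discreteMeasure ξ p, z₀, discreteMeasure_mem hξ mass_eq_one hfeas,
      (integral_discreteMeasure ξ p Q).trans hη⟩
  have le_bound : ∀ w ∈ values, w ≤ η + v := by
    rintro _ ⟨P, z, hP, rfl⟩
    obtain ⟨α, β, hβ, hobj, hred⟩ := hdual z
    have weak_duality := integral_le_of_reduced_cost_le hP (integrable_of_mem hP hQm hQb)
      (fun i ↦ integrable_of_mem hP (hψm i z) (hψb i z)) hβ hred
    linarith
  exact ⟨le_csSup ⟨η + v, le_bound⟩ value_mem, csSup_le ⟨η, value_mem⟩ le_bound⟩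

end MomentAmbiguity

/-- (Column-generation bounds for mixed-integer ambiguity sets.)
If `η*` is the value of a discrete distribution feasible for some `z⁰ ∈ Z`, and for
every `z ∈ Z` there are dual multipliers `(α_z, β_z)` with `β_z ≥ 0`,
`α_z + ∑_i γ_i(z) β_{z,i} ≤ η*`, and reduced cost at most `v*` on all of `Ξ`, then
`η* ≤ sup_{(P,z) ∈ 𝒫^I} ∫ Q dP ≤ η* + v*`. -/
theorem mixed_integer_pricing_bounds
    (d m n : ℕ) (Ξ : Set (EuclideanSpace ℝ (Fin d)))
    (hΞne : Ξ.Nonempty) (hΞc : IsCompact Ξ)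
    (Q : EuclideanSpace ℝ (Fin d) → ℝ)
    (hQm : Measurable Q) (hQb : ∃ C, ∀ x ∈ Ξ, |Q x| ≤ C)
    (Z : Type*) [Fintype Z] [Nonempty Z]
    (ψ : Fin m → EuclideanSpace ℝ (Fin d) → Z → ℝ)
    (hψm : ∀ i z, Measurable (fun x => ψ i x z))
    (hψb : ∀ i z, ∃ C, ∀ x ∈ Ξ, |ψ i x z| ≤ C)
    (γ : Fin m → Z → ℝ)
    (η v : ℝ)
    (hprimal : ∃ (z₀ : Z) (ξ : Fin n → EuclideanSpace ℝ (Fin d)) (p : Fin n → ℝ),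
      (∀ j, ξ j ∈ Ξ) ∧ (∀ j, 0 ≤ p j) ∧ (∑ j, p j = 1) ∧
      (∀ i, ∑ j, p j * ψ i (ξ j) z₀ ≤ γ i z₀) ∧
      (∑ j, p j * Q (ξ j)) = η)
    (hdual : ∀ z : Z, ∃ (α : ℝ) (β : Fin m → ℝ),
      (∀ i, 0 ≤ β i) ∧ α + ∑ i, γ i z * β i ≤ η ∧
      ∀ x ∈ Ξ, Q x - α - ∑ i, ψ i x z * β i ≤ v) :
    η ≤ sSup {w : ℝ | ∃ (P : Measure (EuclideanSpace ℝ (Fin d))) (z : Z),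
        (IsProbabilityMeasure P ∧ P Ξᶜ = 0 ∧ ∀ i, ∫ x, ψ i x z ∂P ≤ γ i z) ∧
        (∫ x, Q x ∂P) = w} ∧
      sSup {w : ℝ | ∃ (P : Measure (EuclideanSpace ℝ (Fin d))) (z : Z),
        (IsProbabilityMeasure P ∧ P Ξᶜ = 0 ∧ ∀ i, ∫ x, ψ i x z ∂P ≤ γ i z) ∧
        (∫ x, Q x ∂P) = w} ≤ η + v := by
  exact mixed_integer_pricing_bounds_general Ξ Q hQm hQb ψ hψm hψb γ η v hprimal hdual
end

section
/- Let Ξ be a nonempty compact subset of ℝ^d, let Q : Ξ → ℝ and ψ_1, …, ψ_m : Ξ → ℝ be bounded Borel measurable, let γ_1, …, γ_m ∈ ℝ, let α* ∈ ℝ, β*_1, …, β*_m ≥ 0, and ε, δ > 0. Suppose |(Q(ξ) − ∑_{i=1}^m ψ_i(ξ) β*_i) − (Q(ξ') − ∑_{i=1}^m ψ_i(ξ') β*_i)| ≤ ε whenever ξ, ξ' ∈ Ξ and ‖ξ − ξ'‖ ≤ δ. Let S, S' ⊆ Ξ be nonempty sets such that every point of S' is within Euclidean distance δ of some point of S (in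 particular this holds when the Hausdorff distance between S' and S is at most δ), and suppose α* + ∑_{i=1}^m ψ_i(ξ) β*_i ≥ Q(ξ) for every ξ ∈ S. Then α* + ε + ∑_{i=1}^m ψ_i(ξ) β*_i ≥ Q(ξ) for every ξ ∈ S'; consequently, every finitely supported probability measure ∑_j p_j δ_{ξ_j} with all ξ_j ∈ S' and ∑_j p_j ψ_i(ξ_j) ≤ γ_i for every i satisfies ∑_j p_j Q(ξ_j) ≤ α* + ε + ∑_{i=1}^m γ_i β*_i. -/
open MeasureTheory

/- Dual feasibility of `(α, β)` on `S` says that the reduced cost `Q - ∑ i, ψ i * β i` is at most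
`α` on `S`. Passing from a point of `S'` to a nearby point of `S` lowers the reduced cost by at most
`ε`, so it is at most `α + ε` on `S'`. The bound on the objective is then weak duality: average the
dual constraint over the distribution and use `β ≥ 0` to replace its moments by `γ`. -/

section DualFeasibility

variable {R X ι : Type*} [Fintype ι]

/-- Dual feasibility of `(α, β)` on the scenario set `S` for the moment problem with objective `Q`
and moment functions `ψ`. The sign condition `0 ≤ β`, which does not involve `S`, is kept
separate. -/
def IsDualFeasible [CommSemiring R] [LE R] (Q : X → R) (ψ : ι → X → R) (S : Set X)
    (α : R) (β : ι → R) : Prop :=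
  ∀ x ∈ S, Q x ≤ α + ∑ i, ψ i x * β i

/-- The reduced cost of the scenario `x` at the multipliers `β`: the least `α` for which `(α, β)`
satisfies the dual constraint at `x`. -/
def reducedCost [CommRing R] (Q : X → R) (ψ : ι → X → R) (β : ι → R) (x : X) : R :=
  Q x - ∑ i, ψ i x * β i

section Perturbation

variable [CommRing R] [PartialOrder R] [IsOrderedAddMonoid R]
  {Q : X → R} {ψ : ι → X → R} {S S' : Set X} {α ε : R} {β : ι → R}

theorem isDualFeasible_iff_reducedCost_le :
    IsDualFeasible Q ψ S α β ↔ ∀ x ∈ S, reducedCost Q ψ β x ≤ α := by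
  simp only [IsDualFeasible, reducedCost, sub_le_iff_le_add]

theorem IsDualFeasible.of_reducedCost_sub_le (hS : IsDualFeasible Q ψ S α β)
    (hnear : ∀ y ∈ S', ∃ x ∈ S, reducedCost Q ψ β y - reducedCost Q ψ β x ≤ ε) :
    IsDualFeasible Q ψ S' (α + ε) β := by
  rw [isDualFeasible_iff_reducedCost_le] at hS ⊢
  intro y hy
  obtain ⟨x, hx, hyx⟩ := hnear y hy
  calc reducedCost Q ψ β y
      ≤ reducedCost Q ψ β x + ε := sub_le_iff_le_add'.mp hyx
    _ ≤ α + ε := by gcongr; exact hS x hx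

end Perturbation

section WeakDuality

variable {κ : Type*} [Fintype κ] [CommSemiring R]

theorem sum_mul_add_sum_mul_of_sum_eq_one {p : κ → R} (hp : ∑ j, p j = 1)
    (α : R) (a : κ → ι → R) (β : ι → R) :
    ∑ j, p j * (α + ∑ i, a j i * β i) = α + ∑ i, (∑ j, p j * a j i) * β i := by
  have hswap : ∑ j, p j * ∑ i, a j i * β i = ∑ i, (∑ j, p j * a j i) * β i :=
    Matrix.dotProduct_mulVec p (Matrix.of a) β
  simp only [mul_add, Finset.sum_add_distrib, ← Finset.sum_mul, hp, one_mul, hswap]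

variable [PartialOrder R] [IsOrderedRing R]
  {Q : X → R} {ψ : ι → X → R} {S : Set X} {α : R} {β γ : ι → R}

theorem IsDualFeasible.sum_mul_le (hS : IsDualFeasible Q ψ S α β) (hβ : ∀ i, 0 ≤ β i)
    {ξ : κ → X} {p : κ → R} (hξ : ∀ j, ξ j ∈ S) (hp : ∀ j, 0 ≤ p j) (hsum : ∑ j, p j = 1)
    (hγ : ∀ i, ∑ j, p j * ψ i (ξ j) ≤ γ i) :
    ∑ j, p j * Q (ξ j) ≤ α + ∑ i, γ i * β i :=
  calc ∑ j, p j * Q (ξ j)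
      ≤ ∑ j, p j * (α + ∑ i, ψ i (ξ j) * β i) := by
        gcongr with j
        · exact hp j
        · exact hS (ξ j) (hξ j)
    _ = α + ∑ i, (∑ j, p j * ψ i (ξ j)) * β i :=
        sum_mul_add_sum_mul_of_sum_eq_one hsum α (fun j i ↦ ψ i (ξ j)) β
    _ ≤ α + ∑ i, γ i * β i := by
        gcongr with i
        · exact hβ i
        · exact hγ i

end WeakDuality

theorem dual_feasibility_perturbation_general [CommRing R] [PartialOrder R] [IsOrderedRing R]
    {Q : X → R} {ψ : ι → X → R} {S S' : Set X} {α ε : R} {β : ι → R} (γ : ι → R)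
    (hβ : ∀ i, 0 ≤ β i)
    (hnear : ∀ y ∈ S', ∃ x ∈ S, reducedCost Q ψ β y - reducedCost Q ψ β x ≤ ε)
    (hS : IsDualFeasible Q ψ S α β) :
    IsDualFeasible Q ψ S' (α + ε) β ∧
      ∀ (κ : Type*) [Fintype κ] (ξ : κ → X) (p : κ → R),
        (∀ j, ξ j ∈ S') → (∀ j, 0 ≤ p j) → ∑ j, p j = 1 →
        (∀ i, ∑ j, p j * ψ i (ξ j) ≤ γ i) →
        ∑ j, p j * Q (ξ j) ≤ α + ε + ∑ i, γ i * β i := by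
  have hS' : IsDualFeasible Q ψ S' (α + ε) β := hS.of_reducedCost_sub_le hnear
  exact ⟨hS', fun _ _ _ _ hξ hp hsum hγ ↦ hS'.sum_mul_le hβ hξ hp hsum hγ⟩

end DualFeasibility

/-- (Perturbation of dual feasibility across nearby scenario sets.)
If the reduced-cost profile `Q − ∑_i ψ_i β*_i` is uniformly continuous with modulus
`(ε, δ)` on `Ξ`, every point of `S'` lies within distance `δ` of a point of `S`, and
`(α*, β*)` is dual feasible on `S`, then `(α* + ε, β*)` is dual feasible on `S'`;
consequently every feasible finitely supported distribution on `S'` has objective at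
most `α* + ε + ∑_i γ_i β*_i`. -/
theorem dual_feasibility_perturbation
    (d m : ℕ) (Ξ : Set (EuclideanSpace ℝ (Fin d)))
    (hΞne : Ξ.Nonempty) (hΞc : IsCompact Ξ)
    (Q : EuclideanSpace ℝ (Fin d) → ℝ)
    (hQm : Measurable Q) (hQb : ∃ C, ∀ x ∈ Ξ, |Q x| ≤ C)
    (ψ : Fin m → EuclideanSpace ℝ (Fin d) → ℝ)
    (hψm : ∀ i, Measurable (ψ i)) (hψb : ∀ i, ∃ C, ∀ x ∈ Ξ, |ψ i x| ≤ C)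
    (γ : Fin m → ℝ) (α : ℝ) (β : Fin m → ℝ) (hβ : ∀ i, 0 ≤ β i)
    (ε δ : ℝ) (hε : 0 < ε) (hδ : 0 < δ)
    (hunif : ∀ x ∈ Ξ, ∀ y ∈ Ξ, ‖x - y‖ ≤ δ →
      |(Q x - ∑ i, ψ i x * β i) - (Q y - ∑ i, ψ i y * β i)| ≤ ε)
    (S S' : Set (EuclideanSpace ℝ (Fin d)))
    (hS : S ⊆ Ξ) (hS' : S' ⊆ Ξ) (hSne : S.Nonempty) (hS'ne : S'.Nonempty)
    (hclose : ∀ y ∈ S', ∃ x ∈ S, ‖y - x‖ ≤ δ)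
    (hdualS : ∀ x ∈ S, Q x ≤ α + ∑ i, ψ i x * β i) :
    (∀ y ∈ S', Q y ≤ α + ε + ∑ i, ψ i y * β i) ∧
    (∀ (n : ℕ) (ξv : Fin n → EuclideanSpace ℝ (Fin d)) (p : Fin n → ℝ),
      (∀ j, ξv j ∈ S') → (∀ j, 0 ≤ p j) → (∑ j, p j = 1) →
      (∀ i, ∑ j, p j * ψ i (ξv j) ≤ γ i) →
      ∑ j, p j * Q (ξv j) ≤ α + ε + ∑ i, γ i * β i) := by
  have hnear : ∀ y ∈ S', ∃ x ∈ S, reducedCost Q ψ β y - reducedCost Q ψ β x ≤ ε := fun y hy ↦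
    (hclose y hy).imp fun x ⟨hx, hyx⟩ ↦ ⟨hx, le_of_abs_le (hunif y (hS' hy) x (hS hx) hyx)⟩
  exact (dual_feasibility_perturbation_general γ hβ hnear hdualS).imp_right fun h n ↦ h (Fin n)
end
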